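/- arXiv:1712.03145 — 3 statements merged into one kernel-verified Lean document; each statement's English description precedes it below -/
import Mathlib

section
/- Let m ≥ 1 and k ≥ 2 be integers, and let G be a graph whose complement is K_k^m-free. Then G contains a collection of at most C(k,2) = k(k−1)/2 vertex-disjoint cycles covering all but at most k^2·m vertices of G. -/
def ContainsCopy {α β : Type*} (H : SimpleGraph α) (G : SimpleGraph β) : Prop :=
  ∃ f : α → β, Function.Injective f ∧ ∀ a b, H.Adj a b → G.Adj (f a) (f b)

def IsCycleSet {V : Type*} (G : SimpleGraph V) (S : Set V) : Prop :=
  (∃ v, S = {v}) ∨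
  (∃ u v, G.Adj u v ∧ S = {u, v}) ∨
  (∃ (v : V) (w : G.Walk v v), w.IsCycle ∧ S = {x | x ∈ w.support})

open Classical in
def HasMP {V : Type*} (G : SimpleGraph V) (m : ℕ) : ℕ → Finset V → Prop
  | 0, _ => True
  | t+1, S => ∃ B A : Finset V, B ⊆ S ∧ A ⊆ S ∧ Disjoint B A ∧ B.card = m ∧
      (∀ b ∈ B, ∀ a ∈ A, ¬ G.Adj b a) ∧ HasMP G m t A

theorem HasMP.mono {V : Type*} {G : SimpleGraph V} {m t : ℕ} {A S : Finset V}
    (h : HasMP G m t A) (hs : A ⊆ S) : HasMP G m t S := by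
  cases t with
  | zero => trivial
  | succ t =>
    obtain ⟨B, C, h1, h2, h3⟩ := h
    exact ⟨B, C, h1.trans hs, h2.trans hs, h3⟩

theorem HasMP.family {V : Type*} {G : SimpleGraph V} {m : ℕ} (t : ℕ) : ∀ (S : Finset V),
    HasMP G m t S → ∃ F : Fin t → Finset V, (∀ i, F i ⊆ S) ∧ (∀ i, (F i).card = m) ∧
      ∀ i j, i ≠ j → Disjoint (F i) (F j) ∧ ∀ a ∈ F i, ∀ b ∈ F j, ¬ G.Adj a b := by
  induction t with
  | zero => intro S _; exact ⟨fun _ => ∅, fun i => i.elim0, fun i => i.elim0, fun i => i.elim0⟩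
  | succ t ih =>
    rintro S ⟨B, A, hB, hA, hd, hc, hn, h⟩
    obtain ⟨F, f1, f2, f3⟩ := ih A h
    refine ⟨Fin.cons B F, ?_, ?_, ?_⟩
    · intro i; refine Fin.cases hB (fun i => (f1 i).trans hA) i
    · intro i; refine Fin.cases hc (fun i => f2 i) i
    · intro i j
      refine Fin.cases ?_ (fun i => ?_) i <;> refine Fin.cases ?_ (fun j => ?_) j
      · intro h; exact absurd rfl h
      · intro _
        simp only [Fin.cons_zero, Fin.cons_succ]
        exact ⟨hd.mono_right (f1 j), fun a ha b hb => hn a ha b (f1 j hb)⟩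
      · intro _
        simp only [Fin.cons_zero, Fin.cons_succ]
        exact ⟨(hd.mono_right (f1 i)).symm, fun a ha b hb hab => hn b hb a (f1 i ha) hab.symm⟩
      · intro h
        simp only [Fin.cons_succ]
        exact f3 i j (fun e => h (by rw [e]))

theorem HasMP.copy {V : Type*} {G : SimpleGraph V} {m k : ℕ} {S : Finset V}
    (h : HasMP G m k S) :
    ContainsCopy (SimpleGraph.completeMultipartiteGraph fun _ : Fin k => Fin m) Gᶜ := by
  obtain ⟨F, _, f2, f3⟩ := h.family
  let e : ∀ i, Fin m ≃ F i := fun i => ((F i).equivFinOfCardEq (f2 i)).symm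
  have key : ∀ i j, i ≠ j → ∀ a b, ((e i a : V)) ≠ e j b := by
    intro i j hij a b hab
    exact Finset.disjoint_left.1 (f3 i j hij).1 (e i a).2 (hab ▸ (e j b).2)
  refine ⟨fun x => (e x.1 x.2 : V), ?_, ?_⟩
  · rintro ⟨i, a⟩ ⟨j, b⟩ hab
    by_cases hij : i = j
    · subst hij
      have : a = b := (e i).injective (Subtype.ext hab)
      rw [this]
    · exact absurd hab (key i j hij a b)
  · rintro ⟨i, a⟩ ⟨j, b⟩ hab
    have hij : i ≠ j := by simpa using hab
    rw [SimpleGraph.compl_adj]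
    exact ⟨key i j hij a b, (f3 i j hij).2 _ (e i a).2 _ (e j b).2⟩

def CycCover {V : Type*} (G : SimpleGraph V) (c r : ℕ) (S : Finset V) : Prop :=
  ∃ 𝒞 : Finset (Set V), 𝒞.card ≤ c ∧ (𝒞 : Set (Set V)).Pairwise Disjoint ∧
    (∀ T ∈ 𝒞, IsCycleSet G T ∧ T ⊆ (S : Set V)) ∧
    ((S : Set V) \ ⋃₀ (𝒞 : Set (Set V))).ncard ≤ r

theorem CycCover.empty {V : Type*} (G : SimpleGraph V) {r : ℕ} {S : Finset V} (h : S.card ≤ r)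
    (c : ℕ) : CycCover G c r S :=
  ⟨∅, by simp, by simp, by simp, by simpa [Set.ncard_coe_finset] using h⟩

theorem CycCover.single {V : Type*} (G : SimpleGraph V) {S : Finset V}
    (h : IsCycleSet G (S : Set V)) : CycCover G 1 0 S :=
  ⟨{(S : Set V)}, by simp, by simp, by simpa using h, by simp⟩

theorem CycCover.mono {V : Type*} {G : SimpleGraph V} {S : Finset V} {c r c' r' : ℕ}
    (h : CycCover G c r S) (hc : c ≤ c') (hr : r ≤ r') : CycCover G c' r' S := by
  obtain ⟨C, h1, h2, h3, h4⟩ := h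
  exact ⟨C, h1.trans hc, h2, h3, h4.trans hr⟩

open Classical in
theorem CycCover.union {V : Type*} {G : SimpleGraph V} {S T : Finset V} {c r c' r' : ℕ}
    (h : CycCover G c r S) (h' : CycCover G c' r' T) (hd : Disjoint S T) :
    CycCover G (c + c') (r + r') (S ∪ T) := by
  obtain ⟨C, h1, h2, h3, h4⟩ := h
  obtain ⟨D, g1, g2, g3, g4⟩ := h'
  have hd' : Disjoint (S : Set V) (T : Set V) := by exact_mod_cast hd
  refine ⟨C ∪ D, (Finset.card_union_le _ _).trans (by omega), ?_, ?_, ?_⟩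
  · intro X hX Y hY hne
    simp only [Finset.coe_union, Set.mem_union, Finset.mem_coe] at hX hY
    rcases hX with hX | hX <;> rcases hY with hY | hY
    · exact h2 hX hY hne
    · exact hd'.mono (h3 X hX).2 (g3 Y hY).2
    · exact (hd'.mono (h3 Y hY).2 (g3 X hX).2).symm
    · exact g2 hX hY hne
  · intro X hX
    rw [Finset.coe_union]
    rcases Finset.mem_union.1 hX with hX | hX
    · exact ⟨(h3 X hX).1, (h3 X hX).2.trans Set.subset_union_left⟩
    · exact ⟨(g3 X hX).1, (g3 X hX).2.trans Set.subset_union_right⟩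
  · have : ((S ∪ T : Finset V) : Set V) \ ⋃₀ ((C ∪ D : Finset (Set V)) : Set (Set V)) ⊆
        ((S : Set V) \ ⋃₀ (C : Set (Set V))) ∪ ((T : Set V) \ ⋃₀ (D : Set (Set V))) := by
      intro x
      simp only [Finset.coe_union, Set.sUnion_union, Set.mem_sdiff, Set.mem_union]
      tauto
    refine (Set.ncard_le_ncard this ?_).trans ((Set.ncard_union_le _ _).trans (by omega))
    exact (S.finite_toSet.sdiff).union (T.finite_toSet.sdiff)

open Classical in
theorem cycleSet_of_list {V : Type*} (G : SimpleGraph V) (l : List V) (hne : l ≠ [])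
    (hc : l.IsChain G.Adj) (hn : l.Nodup) (ha : G.Adj (l.getLast hne) (l.head hne)) :
    IsCycleSet G (l.toFinset : Set V) := by
  match l, hne, hc, hn, ha with
  | [a], _, _, _, ha => simp at ha
  | [a, b], _, _, _, ha =>
    right; left
    exact ⟨a, b, by simpa using ha.symm, by simp⟩
  | a :: b :: c :: l, hne, hc, hn, ha =>
    right; right
    have hl : (a :: b :: c :: l).getLast hne = (c :: l).getLast (by simp) := by simp
    have hm := List.getLast_mem (l := c :: l) (by simp)
    rw [hl] at ha
    have hz : ∃ q : G.Walk b ((c :: l).getLast (by simp)), q.support = b :: c :: l :=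
      ⟨SimpleGraph.Walk.ofSupport (b :: c :: l) (by simp) hc.of_cons,
          SimpleGraph.Walk.support_ofSupport ..⟩
    generalize (c :: l).getLast (by simp) = z at ha hm hz
    obtain ⟨q, hq⟩ := hz
    have hab : G.Adj a b := hc.rel
    change G.Adj z a at ha
    rw [List.nodup_cons] at hn
    refine ⟨_, SimpleGraph.Walk.cons ha (SimpleGraph.Walk.cons hab q), ?_, ?_⟩
    · rw [SimpleGraph.Walk.cons_isCycle_iff]
      refine ⟨?_, ?_⟩
      · rw [SimpleGraph.Walk.isPath_def, SimpleGraph.Walk.support_cons, hq]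
        exact List.nodup_cons.2 hn
      · simp only [SimpleGraph.Walk.edges_cons, List.mem_cons]
        rintro (h | h)
        · simp only [Sym2.eq_iff] at h
          have hb : b ∉ c :: l := (List.nodup_cons.1 hn.2).1
          rcases h with ⟨h, -⟩ | ⟨h, -⟩
          · exact hn.1 (List.mem_cons_of_mem _ (h ▸ hm))
          · exact hb (h ▸ hm)
        · have := SimpleGraph.Walk.snd_mem_support_of_mem_edges _ h
          rw [hq] at this
          exact hn.1 this
    · ext x
      simp only [SimpleGraph.Walk.support_cons, hq, List.coe_toFinset]
      change x ∈ a :: b :: c :: l ↔ x ∈ z :: a :: b :: c :: l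
      constructor
      · exact fun h => List.mem_cons_of_mem _ h
      · intro h
        rcases List.mem_cons.1 h with h | h
        · exact h ▸ List.mem_cons_of_mem _ (List.mem_cons_of_mem _ hm)
        · exact h

open Classical in
theorem path_cover {V : Type*} (G : SimpleGraph V) (m : ℕ) (hm : 1 ≤ m) (t : ℕ) :
    ∀ l : List V, l.IsChain G.Adj → l.Nodup → ¬ HasMP G m (t+1) l.toFinset →
      CycCover G t ((t+1)*m) l.toFinset := by
  induction t with
  | zero =>
    intro l hc hn hH
    apply CycCover.empty
    by_contra hlt
    obtain ⟨B, hB, hBc⟩ := Finset.exists_subset_card_eq (s := l.toFinset) (n := m) (by omega)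
    exact hH ⟨B, ∅, hB, by simp, by simp, hBc, by simp, trivial⟩
  | succ t ih =>
    intro l hc hn hH
    by_cases hlen : l.length ≤ m
    · apply CycCover.empty
      rw [List.toFinset_card_of_nodup hn]
      nlinarith
    push Not at hlen
    let P : ℕ → Prop := fun j => m ≤ j ∧ ∃ (i : ℕ) (hi : i < m) (hj : j < l.length),
      G.Adj l[i] l[j]
    have hPm : P m := by
      refine ⟨le_rfl, m-1, by omega, hlen, ?_⟩
      have := List.isChain_iff_getElem.1 hc (m-1) (by omega)
      have e : m - 1 + 1 = m := by omega
      simpa only [e] using this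
    have hj0 := Nat.findGreatest_spec (P := P) hlen.le hPm
    have hgr : ∀ j, Nat.findGreatest P l.length < j → j ≤ l.length → ¬ P j :=
      fun j h1 h2 => Nat.findGreatest_is_greatest h1 h2
    generalize Nat.findGreatest P l.length = j at hj0 hgr
    obtain ⟨hmj, i, hi, hj, hadj⟩ := hj0
    have hsplit : l = l.take i ++ ((l.take (j+1)).drop i ++ l.drop (j+1)) := by
      have h1 : l.take (j+1) = l.take i ++ (l.take (j+1)).drop i := by
        conv_lhs => rw [← List.take_append_drop i (l.take (j+1))]
        rw [List.take_take, min_eq_left (by omega)]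
      rw [← List.append_assoc, ← h1, List.take_append_drop]
    set c := (l.take (j+1)).drop i with hcdef
    have hclen : c.length = j + 1 - i := by simp [hcdef]; omega
    have hcne : c ≠ [] := by
      intro h; rw [h] at hclen; simp at hclen; omega
    have hhead : c.head hcne = l[i] := by
      rw [List.head_eq_getElem]; simp [hcdef]
    have hlast : c.getLast hcne = l[j] := by
      rw [List.getLast_eq_getElem]
      simp only [hcdef, List.getElem_drop, List.getElem_take]
      congr 1
      rw [← hcdef, hclen]; omega
    have hcc : c.IsChain G.Adj := (hc.take _).drop _
    have hcn : c.Nodup := (hn.sublist (List.take_sublist _ _)).sublist (List.drop_sublist _ _)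
    have hcyc := cycleSet_of_list G c hcne hcc hcn (by rw [hhead, hlast]; exact hadj.symm)
    have hrest : ¬ HasMP G m (t+1) (l.drop (j+1)).toFinset := by
      intro hh
      refine hH ⟨(l.take m).toFinset, (l.drop (j+1)).toFinset, ?_, ?_, ?_, ?_, ?_, hh⟩
      · intro x; simp only [List.mem_toFinset]; exact fun h => List.mem_of_mem_take h
      · intro x; simp only [List.mem_toFinset]; exact fun h => List.mem_of_mem_drop h
      · rw [List.disjoint_toFinset_iff_disjoint]
        exact List.disjoint_take_drop hn (by omega)
      · rw [List.toFinset_card_of_nodup (hn.sublist (List.take_sublist _ _))]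
        simp; omega
      · intro b hb a ha hab
        simp only [List.mem_toFinset] at hb ha
        obtain ⟨p, hp, rfl⟩ := List.mem_iff_getElem.1 hb
        obtain ⟨q, hq, rfl⟩ := List.mem_iff_getElem.1 ha
        simp only [List.length_take, List.length_drop] at hp hq
        simp only [List.getElem_take, List.getElem_drop] at hab
        exact hgr (j+1+q) (by omega) (by omega) ⟨by omega, p, by omega, by omega, hab⟩
    have hn' := hn
    rw [hsplit, List.nodup_append'] at hn'
    obtain ⟨-, hn2, hd1⟩ := hn'
    rw [List.nodup_append'] at hn2
    obtain ⟨-, -, hd2⟩ := hn2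
    have h3 := ih (l.drop (j+1)) (hc.drop _) (hn.sublist (List.drop_sublist _ _)) hrest
    have h2 := (CycCover.single G hcyc).union h3 (List.disjoint_toFinset_iff_disjoint.2 hd2)
    have h1 : CycCover G 0 m (l.take i).toFinset := by
      apply CycCover.empty
      refine (List.toFinset_card_le _).trans ?_
      simp; omega
    rw [← List.toFinset_append] at h2
    have h := h1.union h2 (List.disjoint_toFinset_iff_disjoint.2 hd1)
    rw [← List.toFinset_append, ← hsplit] at h
    exact h.mono (by omega) (by ring_nf; omega)

open Classical in
theorem dfs {V : Type*} (G : SimpleGraph V) (m : ℕ) (n : ℕ) :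
    ∀ (A B : Finset V) (l : List V), 2 * A.card + l.length ≤ n →
      l.IsChain G.Adj → l.Nodup → Disjoint A B → Disjoint A l.toFinset → Disjoint B l.toFinset →
      B.card ≤ m → (∀ b ∈ B, ∀ a ∈ A, ¬ G.Adj b a) →
      ∃ (A' B' : Finset V) (l' : List V), A' ∪ B' ∪ l'.toFinset = A ∪ B ∪ l.toFinset ∧
      l'.IsChain G.Adj ∧ l'.Nodup ∧ Disjoint A' B' ∧ Disjoint A' l'.toFinset ∧
      Disjoint B' l'.toFinset ∧ B'.card ≤ m ∧ (∀ b ∈ B', ∀ a ∈ A', ¬ G.Adj b a) ∧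
      (B'.card = m ∨ A' = ∅) := by
  induction n with
  | zero =>
    intro A B l h hc hn d1 d2 d3 hB hN
    exact ⟨A, B, l, rfl, hc, hn, d1, d2, d3, hB, hN, Or.inr (Finset.card_eq_zero.1 (by omega))⟩
  | succ n ih =>
    intro A B l h hc hn d1 d2 d3 hB hN
    by_cases hend : B.card = m ∨ A = ∅
    · exact ⟨A, B, l, rfl, hc, hn, d1, d2, d3, hB, hN, hend⟩
    push Not at hend
    obtain ⟨hBm, a, ha⟩ := hend
    have hext : ∀ a ∈ A, (a :: l).IsChain G.Adj → _ := fun a ha hch =>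
      ih (A.erase a) B (a :: l) (by
        have := Finset.card_erase_add_one ha
        simp only [List.length_cons]; omega) hch
        (List.nodup_cons.2 ⟨fun hh => Finset.disjoint_left.1 d2 ha (by simpa using hh), hn⟩)
        (d1.mono_left (Finset.erase_subset _ _))
        (by
          rw [Finset.disjoint_left] at d2 ⊢
          intro x hx
          have := d2 (Finset.mem_of_mem_erase hx)
          simp at this hx ⊢; tauto)
        (by
          rw [Finset.disjoint_left] at d3 ⊢
          intro x hx
          have := d3 hx
          have hxa : x ≠ a := fun e => Finset.disjoint_left.1 d1 ha (e ▸ hx)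
          simp at this ⊢; tauto)
        hB (fun b hb x hx => hN b hb x (Finset.mem_of_mem_erase hx))
    have hU : ∀ a ∈ A, A.erase a ∪ B ∪ (a :: l).toFinset = A ∪ B ∪ l.toFinset := by
      intro a ha
      ext x
      simp only [Finset.mem_union, Finset.mem_erase, List.mem_toFinset, List.mem_cons]
      by_cases hx : x = a
      · subst hx; tauto
      · tauto
    match l, hc, hn, d2, d3, h, hext, hU with
    | [], hc, hn, d2, d3, h, hext, hU =>
      have := hext a ha (by simp)
      rwa [hU a ha] at this
    | v :: l, hc, hn, d2, d3, h, hext, hU =>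
      by_cases hv : ∃ a ∈ A, G.Adj v a
      · obtain ⟨a, ha, hva⟩ := hv
        have := hext a ha (List.isChain_cons_cons.2 ⟨hva.symm, hc⟩)
        rwa [hU a ha] at this
      · push Not at hv
        have hvA : v ∉ A := fun hh => Finset.disjoint_left.1 d2 hh (by simp)
        have hvB : v ∉ B := fun hh => Finset.disjoint_left.1 d3 hh (by simp)
        have hsub : l.toFinset ⊆ (v :: l).toFinset := by
          intro x; simp; tauto
        have := ih A (insert v B) l (by simp at h; omega) hc.of_cons (List.nodup_cons.1 hn).2
          (Finset.disjoint_insert_right.2 ⟨hvA, d1⟩) (d2.mono_right hsub)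
          (Finset.disjoint_insert_left.2 ⟨by simpa using (List.nodup_cons.1 hn).1,
            d3.mono_right hsub⟩)
          (by rw [Finset.card_insert_of_notMem hvB]; omega)
          (by
            intro b hb x hx
            rcases Finset.mem_insert.1 hb with rfl | hb
            · exact hv x hx
            · exact hN b hb x hx)
        have e : A ∪ insert v B ∪ l.toFinset = A ∪ B ∪ (v :: l).toFinset := by
          ext x
          simp only [Finset.mem_union, Finset.mem_insert, List.mem_toFinset, List.mem_cons]
          tauto
        rwa [e] at this

open Classical in
theorem main_cover {V : Type*} (G : SimpleGraph V) (m : ℕ) (hm : 1 ≤ m) (t : ℕ) :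
    ∀ S : Finset V, ¬ HasMP G m (t+1) S → CycCover G ((t+1)*t/2) ((t+1)^2*m) S := by
  induction t with
  | zero =>
    intro S hH
    apply CycCover.empty
    by_contra hlt
    obtain ⟨B, hB, hBc⟩ := Finset.exists_subset_card_eq (s := S) (n := m) (by omega)
    exact hH ⟨B, ∅, hB, by simp, by simp, hBc, by simp, trivial⟩
  | succ t ih =>
    intro S hH
    obtain ⟨A, B, l, hU, hc, hn, d1, d2, d3, hB, hN, hend⟩ :=
      dfs G m _ S ∅ [] le_rfl (by simp) (by simp) (by simp) (by simp) (by simp) (by simp) (by simp)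
    have hS : A ∪ B ∪ l.toFinset = S := by simpa using hU
    have hA : CycCover G ((t+1)*t/2) ((t+1)^2*m) A := by
      rcases hend with hend | hend
      · apply ih
        intro hh
        exact hH ⟨B, A, by rw [← hS]; intro x; simp; tauto, by rw [← hS]; intro x; simp; tauto,
          d1.symm, hend, hN, hh⟩
      · subst hend; exact CycCover.empty G (by simp) _
    have hl := path_cover G m hm (t+1) l hc hn
      (fun hh => hH (hh.mono (by rw [← hS]; exact Finset.subset_union_right)))
    have h := (hA.union (CycCover.empty G hB 0) d1).union hl
      (Finset.disjoint_union_left.2 ⟨d2, d3⟩)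
    rw [hS] at h
    refine h.mono ?_ ?_
    · have : (t+1+1)*(t+1) = (t+1)*t + (t+1)*2 := by ring
      rw [this, Nat.add_mul_div_right _ _ (by norm_num)]; omega
    · nlinarith [Nat.zero_le (t*m)]

theorem stmt7 {V : Type*} [Fintype V] (m k : ℕ) (hm : 1 ≤ m) (hk : 2 ≤ k)
    (G : SimpleGraph V)
    (hfree : ¬ ContainsCopy (SimpleGraph.completeMultipartiteGraph fun _ : Fin k => Fin m) Gᶜ) :
    ∃ 𝒞 : Finset (Set V),
      𝒞.card ≤ k * (k - 1) / 2 ∧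
      (𝒞 : Set (Set V)).Pairwise Disjoint ∧
      (∀ S ∈ 𝒞, IsCycleSet G S) ∧
      (Set.univ \ ⋃₀ (𝒞 : Set (Set V))).ncard ≤ k ^ 2 * m := by
  obtain ⟨t, rfl⟩ : ∃ t, k = t + 1 := ⟨k - 1, by omega⟩
  obtain ⟨C, h1, h2, h3, h4⟩ := main_cover G m hm t Finset.univ (fun h => hfree h.copy)
  exact ⟨C, by simpa using h1, h2, fun S hS => (h3 S hS).1, by simpa using h4⟩
end

section
/- For every p = p(n) ∈ (0,1), the random graph G ~ G(n,p) satisfies the following property with high probability: for every family L of ℓ pairwise disjoint pairs of vertices, and for every set Y of 3ℓ vertices that is disjoint from each pair in L, the sum over all pairs {v,w} ∈ L of |N(v,Y) ∩ N(w,Y)| is at most 72·ℓ·log n if ℓ ≤ 6·(log n)/p^2, and at most 2·ℓ·|Y|·p^2 otherwise. -/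
open MeasureTheory Filter

noncomputable def bernoulliM (q : ℝ) : Measure Bool :=
  ENNReal.ofReal q • Measure.dirac true + ENNReal.ofReal (1 - q) • Measure.dirac false

noncomputable def gnp (n : ℕ) (q : ℝ) : Measure (Sym2 (Fin n) → Bool) :=
  Measure.pi fun _ => bernoulliM q

def graphOf {n : ℕ} (ω : Sym2 (Fin n) → Bool) : SimpleGraph (Fin n) :=
  SimpleGraph.fromRel (fun u v => ω s(u, v))

/-- The common neighbourhood of `v` and `w` inside `Y`. -/
def commonNbhdIn {n : ℕ} (G : SimpleGraph (Fin n)) (v w : Fin n) (Y : Finset (Fin n)) :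
    Set (Fin n) :=
  {y | y ∈ Y ∧ G.Adj v y ∧ G.Adj w y}

lemma bern_prob (q : ℝ) (h0 : 0 < q) (h1 : q < 1) : IsProbabilityMeasure (bernoulliM q) := by
  constructor
  simp [bernoulliM]
  rw [← ENNReal.ofReal_add h0.le (by linarith)]
  simp

lemma bern_true (q : ℝ) : bernoulliM q {true} = ENNReal.ofReal q := by
  simp [bernoulliM]

lemma pi_all {E : Type*} [Fintype E] [DecidableEq E] (q : ℝ) (h0 : 0 < q) (h1 : q < 1)
    (T : Finset E) :
    (Measure.pi fun _ : E => bernoulliM q) {ω | ∀ e ∈ T, ω e = true} = ENNReal.ofReal q ^ T.card := by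
  haveI := bern_prob q h0 h1
  have : {ω : E → Bool | ∀ e ∈ T, ω e = true} =
      Set.pi Set.univ (fun e => if e ∈ T then {true} else Set.univ) := by
    ext ω
    simp only [Set.mem_setOf_eq, Set.mem_pi, Set.mem_univ, true_implies]
    refine forall_congr' fun e => ?_
    by_cases h : e ∈ T <;> simp [h]
  rw [this, Measure.pi_pi]
  have : ∀ e, bernoulliM q (if e ∈ T then {true} else Set.univ)
      = if e ∈ T then ENNReal.ofReal q else 1 := by
    intro e
    by_cases h : e ∈ T
    · simp [h, bern_true]
    · rw [if_neg h, if_neg h]; exact measure_univ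
  simp only [this]
  rw [Finset.prod_ite_mem]
  simp

lemma mgf_bound {E I : Type*} [Fintype E] [DecidableEq E] [DecidableEq I] (q : ℝ) (h0 : 0 < q) (h1 : q < 1)
    (J : Finset I) (T : I → Finset E) (hT : ∀ i ∈ J, (T i).card = 2)
    (hd : ∀ i ∈ J, ∀ j ∈ J, i ≠ j → Disjoint (T i) (T j)) :
    ∫⁻ ω, (2 : ENNReal) ^ (J.filter (fun i => ∀ e ∈ T i, ω e = true)).card
      ∂(Measure.pi fun _ : E => bernoulliM q) ≤ ENNReal.ofReal (Real.exp (J.card * q ^ 2)) := by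
  have key : ∀ ω : E → Bool, (2 : ENNReal) ^ (J.filter (fun i => ∀ e ∈ T i, ω e = true)).card
      = ∑ S ∈ J.powerset, Set.indicator {ω : E → Bool | ∀ e ∈ S.biUnion T, ω e = true} 1 ω := by
    intro ω
    have h1 : (2 : ENNReal) ^ (J.filter (fun i => ∀ e ∈ T i, ω e = true)).card
      = ∏ i ∈ J, (1 + if (∀ e ∈ T i, ω e = true) then 1 else 0) := by
      rw [← Finset.prod_const, Finset.prod_filter]
      refine Finset.prod_congr rfl fun i _ => ?_
      split_ifs <;> norm_num
    rw [h1, Finset.prod_one_add]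
    refine Finset.sum_congr rfl fun S _ => ?_
    rw [Finset.prod_ite_zero]
    simp only [Set.indicator, Set.mem_setOf_eq, Finset.mem_biUnion, Finset.prod_const_one, Pi.one_apply]
    congr 1
    simp only [eq_iff_iff]
    constructor
    · rintro h e ⟨i, hi, he⟩; exact h i hi e he
    · intro h i hi e he; exact h e ⟨i, hi, he⟩
  simp_rw [key]
  rw [lintegral_finset_sum _ (fun _ _ => measurable_of_finite _)]
  have h2 : ∀ S ∈ J.powerset, ∫⁻ ω, Set.indicator {ω : E → Bool | ∀ e ∈ S.biUnion T, ω e = true} 1 ω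
      ∂(Measure.pi fun _ : E => bernoulliM q) = (ENNReal.ofReal q ^ 2) ^ S.card := by
    intro S hS
    rw [lintegral_indicator_one (Set.toFinite _).measurableSet, pi_all q h0 h1, ← pow_mul]
    congr 1
    rw [Finset.card_biUnion, Finset.sum_congr rfl (fun i hi => hT i (Finset.mem_powerset.1 hS hi))]
    · simp [mul_comm]
    · intro i hi j hj hij
      exact hd i (Finset.mem_powerset.1 hS hi) j (Finset.mem_powerset.1 hS hj) hij
  rw [Finset.sum_congr rfl h2]
  have h3 := Finset.prod_one_add (f := fun _ : I => ENNReal.ofReal q ^ 2) J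
  simp only [Finset.prod_const] at h3
  rw [← h3, ← ENNReal.ofReal_pow h0.le, ← ENNReal.ofReal_one, ← ENNReal.ofReal_add zero_le_one (by positivity),
    ← ENNReal.ofReal_pow (by positivity)]
  apply ENNReal.ofReal_le_ofReal
  rw [Real.exp_nat_mul]
  gcongr
  linarith [Real.add_one_le_exp (q ^ 2)]

lemma tail_bound {E I : Type*} [Fintype E] [DecidableEq E] [DecidableEq I] (q : ℝ) (h0 : 0 < q) (h1 : q < 1)
    (J : Finset I) (T : I → Finset E) (hT : ∀ i ∈ J, (T i).card = 2)
    (hd : ∀ i ∈ J, ∀ j ∈ J, i ≠ j → Disjoint (T i) (T j)) (a : ℝ) :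
    (Measure.pi fun _ : E => bernoulliM q)
      {ω | a < ((J.filter (fun i => ∀ e ∈ T i, ω e = true)).card : ℝ)}
      ≤ ENNReal.ofReal (Real.exp (J.card * q ^ 2 - a * Real.log 2)) := by
  have hm := meas_ge_le_lintegral_div (μ := (Measure.pi fun _ : E => bernoulliM q))
    (f := fun ω => (2 : ENNReal) ^ (J.filter (fun i => ∀ e ∈ T i, ω e = true)).card)
    (measurable_of_finite _).aemeasurable (ε := ENNReal.ofReal (Real.exp (a * Real.log 2)))
    (by simp [Real.exp_pos]) (by simp)
  refine (measure_mono ?_).trans (hm.trans ?_)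
  · intro ω hω
    simp only [Set.mem_setOf_eq] at hω ⊢
    have : (2 : ENNReal) = ENNReal.ofReal 2 := by simp
    rw [this, ← ENNReal.ofReal_pow (by norm_num)]
    apply ENNReal.ofReal_le_ofReal
    rw [← Real.rpow_natCast, Real.rpow_def_of_pos (by norm_num), mul_comm]
    apply Real.exp_le_exp.2
    have := Real.log_pos (show (1:ℝ) < 2 by norm_num)
    gcongr
  · rw [Real.exp_sub, ENNReal.ofReal_div_of_pos (Real.exp_pos _)]
    gcongr
    exact mgf_bound q h0 h1 J T hT hd

lemma sum_eq {n : ℕ} (ω : Sym2 (Fin n) → Bool) (L : Finset (Fin n × Fin n)) (Y : Finset (Fin n))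
    (h : ∀ q ∈ L, q.1 ∉ Y ∧ q.2 ∉ Y) :
    ∑ q ∈ L, (commonNbhdIn (graphOf ω) q.1 q.2 Y).ncard =
    ((L ×ˢ Y).filter (fun i => ∀ e ∈ ({s(i.1.1, i.2), s(i.1.2, i.2)} : Finset (Sym2 (Fin n))), ω e = true)).card := by
  rw [Finset.card_filter, Finset.sum_product]
  refine Finset.sum_congr rfl fun q hq => ?_
  rw [← Finset.card_filter, ← Set.ncard_coe_finset]
  congr 1
  ext y
  simp only [commonNbhdIn, graphOf, SimpleGraph.fromRel_adj, Set.mem_setOf_eq, Finset.coe_filter,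
    Finset.mem_insert, Finset.mem_singleton, forall_eq_or_imp, forall_eq]
  refine and_congr_right fun hy => ?_
  have e1 : q.1 ≠ y := fun hh => (h q hq).1 (hh ▸ hy)
  have e2 : q.2 ≠ y := fun hh => (h q hq).2 (hh ▸ hy)
  rw [Sym2.eq_swap (a := y) (b := q.1), Sym2.eq_swap (a := y) (b := q.2)]
  simp [e1, e2]

def badAt (n : ℕ) (q : ℝ) (L : Finset (Fin n × Fin n)) (Y : Finset (Fin n)) :
    Set (Sym2 (Fin n) → Bool) :=
  {ω | ¬ ((∀ q ∈ L, q.1 ≠ q.2) →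
        (∀ q ∈ L, ∀ q' ∈ L, q ≠ q' →
          ({q.1, q.2} : Set (Fin n)) ∩ ({q'.1, q'.2} : Set (Fin n)) = ∅) →
        Y.card = 3 * L.card →
        (∀ q ∈ L, q.1 ∉ Y ∧ q.2 ∉ Y) →
        ((((L.card : ℝ) ≤ 6 * Real.log n / q ^ 2) →
            ((∑ q ∈ L, (commonNbhdIn (graphOf ω) q.1 q.2 Y).ncard : ℕ) : ℝ) ≤
              72 * L.card * Real.log n) ∧
         (¬ ((L.card : ℝ) ≤ 6 * Real.log n / q ^ 2) →
            ((∑ q ∈ L, (commonNbhdIn (graphOf ω) q.1 q.2 Y).ncard : ℕ) : ℝ) ≤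
              2 * L.card * Y.card * q ^ 2)))}

lemma bad_bound (n : ℕ) (q : ℝ) (h0 : 0 < q) (h1 : q < 1) (L : Finset (Fin n × Fin n))
    (Y : Finset (Fin n)) :
    gnp n q (badAt n q L Y) ≤ ENNReal.ofReal (Real.exp (-(13/2 * L.card * Real.log n))) := by
  by_cases hA : (∀ q ∈ L, q.1 ≠ q.2) ∧ (∀ q ∈ L, ∀ q' ∈ L, q ≠ q' →
          ({q.1, q.2} : Set (Fin n)) ∩ ({q'.1, q'.2} : Set (Fin n)) = ∅) ∧
        Y.card = 3 * L.card ∧ (∀ q ∈ L, q.1 ∉ Y ∧ q.2 ∉ Y)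
  swap
  · have : badAt n q L Y = ∅ := by
      ext ω
      simp only [badAt, Set.mem_setOf_eq, Set.mem_empty_iff_false, iff_false, not_not]
      intro a b c d
      exact absurd ⟨a, b, c, d⟩ hA
    simp [this]
  obtain ⟨a, b, c, d⟩ := hA
  have hT : ∀ i ∈ L ×ˢ Y, ({s(i.1.1, i.2), s(i.1.2, i.2)} : Finset (Sym2 (Fin n))).card = 2 := by
    rintro ⟨⟨v, w⟩, y⟩ hi
    simp only [Finset.mem_product] at hi
    apply Finset.card_pair
    have := a _ hi.1
    simp only [ne_eq, Sym2.eq_iff] at this ⊢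
    rintro (⟨h, _⟩ | ⟨h, h'⟩)
    · exact this h
    · exact this (h.trans h')
  have hd : ∀ i ∈ L ×ˢ Y, ∀ j ∈ L ×ˢ Y, i ≠ j →
      Disjoint ({s(i.1.1, i.2), s(i.1.2, i.2)} : Finset (Sym2 (Fin n)))
        ({s(j.1.1, j.2), s(j.1.2, j.2)} : Finset (Sym2 (Fin n))) := by
    rintro ⟨⟨v, w⟩, y⟩ hi ⟨⟨v', w'⟩, y'⟩ hj hij
    simp only [Finset.mem_product] at hi hj
    have d1 := d _ hi.1
    have d2 := d _ hj.1
    have b1 := b _ hi.1 _ hj.1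
    simp only [Finset.disjoint_left, Finset.mem_insert, Finset.mem_singleton]
    have hv : ∀ x z, (x = v ∨ x = w) → (z = v' ∨ z = w') → s(x, y) ≠ s(z, y') := by
      intro x z hx hz hs
      have hxY : x ∉ Y := by rcases hx with rfl | rfl; exacts [d1.1, d1.2]
      rcases Sym2.eq_iff.1 hs with ⟨h, h'⟩ | ⟨h, h'⟩
      · by_cases hq : ((v, w) : Fin n × Fin n) = (v', w')
        · exact hij (by rw [hq, h'])
        · have := b1 hq
          have hm : x ∈ ({v, w} : Set (Fin n)) ∩ {v', w'} := by
            constructor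
            · simpa using hx
            · rw [h]; simpa using hz
          simp only at this
          rw [this] at hm
          exact hm
      · exact hxY (h ▸ hj.2)
    rintro e (rfl | rfl) (h | h)
    · exact hv _ _ (Or.inl rfl) (Or.inl rfl) h
    · exact hv _ _ (Or.inl rfl) (Or.inr rfl) h
    · exact hv _ _ (Or.inr rfl) (Or.inl rfl) h
    · exact hv _ _ (Or.inr rfl) (Or.inr rfl) h
  have tb := tail_bound q h0 h1 (L ×ˢ Y)
    (fun i => ({s(i.1.1, i.2), s(i.1.2, i.2)} : Finset (Sym2 (Fin n)))) hT hd
  have hlog : 0 ≤ Real.log n := Real.log_natCast_nonneg n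
  have hc : (Y.card : ℝ) = 3 * L.card := by exact_mod_cast c
  have hJ : ((L ×ˢ Y).card : ℝ) = 3 * L.card ^ 2 := by
    rw [Finset.card_product]; push_cast; rw [hc]; ring
  have hl2 := Real.log_two_gt_d9
  have hl0 : (0:ℝ) ≤ L.card := by positivity
  by_cases hL : (L.card : ℝ) ≤ 6 * Real.log n / q ^ 2
  · refine (measure_mono ?_).trans ((tb (72 * L.card * Real.log n)).trans ?_)
    · intro ω hω
      simp only [badAt, Set.mem_setOf_eq] at hω ⊢
      by_contra hcon
      apply hω
      intro _ _ _ _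
      refine ⟨fun _ => ?_, fun h => absurd hL h⟩
      rw [sum_eq ω L Y d]
      exact not_lt.1 hcon
    · apply ENNReal.ofReal_le_ofReal
      apply Real.exp_le_exp.2
      rw [hJ]
      rw [le_div_iff₀ (by positivity)] at hL
      have e1 : 3 * (L.card : ℝ) ^ 2 * q ^ 2 ≤ 18 * (L.card * Real.log n) := by nlinarith
      have e2 : (0.69:ℝ) * (L.card * Real.log n) ≤ Real.log 2 * (L.card * Real.log n) := by
        gcongr; linarith
      have e3 : 0 ≤ L.card * Real.log n := by positivity
      nlinarith
  · refine (measure_mono ?_).trans ((tb (2 * L.card * Y.card * q ^ 2)).trans ?_)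
    · intro ω hω
      simp only [badAt, Set.mem_setOf_eq] at hω ⊢
      by_contra hcon
      apply hω
      intro _ _ _ _
      refine ⟨fun h => absurd h hL, fun _ => ?_⟩
      rw [sum_eq ω L Y d]
      exact not_lt.1 hcon
    · apply ENNReal.ofReal_le_ofReal
      apply Real.exp_le_exp.2
      rw [hJ, hc]
      rw [not_le, div_lt_iff₀ (by positivity)] at hL
      have e1 : 18 * (L.card * Real.log n) ≤ 3 * (L.card : ℝ) ^ 2 * q ^ 2 := by nlinarith
      have e3 : 0 ≤ L.card * Real.log n := by positivity
      have e2 : (0.69:ℝ) * ((L.card : ℝ) ^ 2 * q ^ 2) ≤ Real.log 2 * ((L.card : ℝ) ^ 2 * q ^ 2) := by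
        gcongr; linarith
      nlinarith

lemma union_bound (n : ℕ) (hn : 1 ≤ n) (q : ℝ) (h0 : 0 < q) (h1 : q < 1) :
    gnp n q (⋃ L, ⋃ Y, badAt n q L Y) ≤ ENNReal.ofReal (Real.exp (-(1/2 * Real.log n))) := by
  have hlog : 0 ≤ Real.log n := Real.log_natCast_nonneg n
  have hn0 : (0:ℝ) < n := by exact_mod_cast hn
  have hsub : (⋃ L, ⋃ Y, badAt n q L Y) ⊆
      ⋃ l ∈ Finset.Icc 1 n, ⋃ L ∈ Finset.powersetCard l (Finset.univ : Finset (Fin n × Fin n)),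
        ⋃ Y ∈ Finset.powersetCard (3 * l) (Finset.univ : Finset (Fin n)), badAt n q L Y := by
    intro ω hω
    simp only [Set.mem_iUnion] at hω ⊢
    obtain ⟨L, Y, h⟩ := hω
    have hc : Y.card = 3 * L.card := by
      by_contra hc
      exact h (fun _ _ c _ => absurd c hc)
    have hY : Y.card ≤ n := by simpa using Finset.card_le_univ Y
    refine ⟨L.card, ?_, L, by simp, Y, by simp [hc], h⟩
    rw [Finset.mem_Icc]
    refine ⟨?_, by omega⟩
    by_contra hL
    have hL0 : L = ∅ := by rw [← Finset.card_eq_zero]; omega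
    subst hL0
    exact h (by simp)
  have hl : ∀ l ∈ Finset.Icc 1 n,
      gnp n q (⋃ L ∈ Finset.powersetCard l (Finset.univ : Finset (Fin n × Fin n)),
        ⋃ Y ∈ Finset.powersetCard (3 * l) (Finset.univ : Finset (Fin n)), badAt n q L Y)
      ≤ ENNReal.ofReal (Real.exp (-(3/2 * Real.log n))) := by
    intro l hl
    have hl1 : (1:ℝ) ≤ l := by exact_mod_cast (Finset.mem_Icc.1 hl).1
    calc _ ≤ ∑ L ∈ Finset.powersetCard l (Finset.univ : Finset (Fin n × Fin n)),
            ∑ Y ∈ Finset.powersetCard (3 * l) (Finset.univ : Finset (Fin n)),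
              gnp n q (badAt n q L Y) :=
          (measure_biUnion_finset_le _ _).trans
            (Finset.sum_le_sum fun L _ => measure_biUnion_finset_le _ _)
      _ ≤ ∑ L ∈ Finset.powersetCard l (Finset.univ : Finset (Fin n × Fin n)),
            ∑ Y ∈ Finset.powersetCard (3 * l) (Finset.univ : Finset (Fin n)),
              ENNReal.ofReal (Real.exp (-(13/2 * l * Real.log n))) := by
          refine Finset.sum_le_sum fun L hL => Finset.sum_le_sum fun Y _ => ?_
          rw [← (Finset.mem_powersetCard.1 hL).2]
          exact bad_bound n q h0 h1 L Y
      _ = (((n * n).choose l * n.choose (3 * l) : ℕ) : ENNReal) *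
            ENNReal.ofReal (Real.exp (-(13/2 * l * Real.log n))) := by
          simp [mul_assoc]
      _ ≤ ((n ^ (5 * l) : ℕ) : ENNReal) * ENNReal.ofReal (Real.exp (-(13/2 * l * Real.log n))) := by
          gcongr
          calc _ ≤ (n * n) ^ l * n ^ (3 * l) :=
                Nat.mul_le_mul (Nat.choose_le_pow _ _) (Nat.choose_le_pow _ _)
            _ = n ^ (5 * l) := by ring
      _ ≤ _ := by
          rw [← ENNReal.ofReal_natCast, ← ENNReal.ofReal_mul (by positivity)]
          apply ENNReal.ofReal_le_ofReal
          push_cast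
          have : (n:ℝ) ^ (5 * l) = Real.exp (5 * l * Real.log n) := by
            rw [← Real.rpow_natCast, Real.rpow_def_of_pos hn0]
            push_cast; ring_nf
          rw [this, ← Real.exp_add]
          apply Real.exp_le_exp.2
          nlinarith
  calc _ ≤ _ := measure_mono hsub
    _ ≤ ∑ l ∈ Finset.Icc 1 n, _ := measure_biUnion_finset_le _ _
    _ ≤ ∑ l ∈ Finset.Icc 1 n, ENNReal.ofReal (Real.exp (-(3/2 * Real.log n))) :=
        Finset.sum_le_sum hl
    _ = ENNReal.ofReal (n * Real.exp (-(3/2 * Real.log n))) := by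
        rw [ENNReal.ofReal_mul hn0.le]; simp
    _ ≤ _ := by
        apply ENNReal.ofReal_le_ofReal
        nth_rw 1 [← Real.exp_log hn0]
        rw [← Real.exp_add]
        apply Real.exp_le_exp.2
        linarith

/-- For every `p = p(n) ∈ (0,1)`, w.h.p. `G ~ G(n,p)` satisfies: for every
family `L` of `ℓ` pairwise disjoint pairs of vertices, and every set `Y` of `3ℓ` vertices
disjoint from each pair in `L`, we have
`∑_{(v,w) ∈ L} |N(v,Y) ∩ N(w,Y)| ≤ 72 ℓ log n` if `ℓ ≤ 6 log n / p²`, and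
`≤ 2 ℓ |Y| p²` otherwise. -/
theorem stmt9 (p : ℕ → ℝ) (hp : ∀ n, 0 < p n ∧ p n < 1) :
    Tendsto (fun n => gnp n (p n)
      {ω | ∀ (L : Finset (Fin n × Fin n)) (Y : Finset (Fin n)),
        (∀ q ∈ L, q.1 ≠ q.2) →
        (∀ q ∈ L, ∀ q' ∈ L, q ≠ q' →
          ({q.1, q.2} : Set (Fin n)) ∩ ({q'.1, q'.2} : Set (Fin n)) = ∅) →
        Y.card = 3 * L.card →
        (∀ q ∈ L, q.1 ∉ Y ∧ q.2 ∉ Y) →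
        ((((L.card : ℝ) ≤ 6 * Real.log n / p n ^ 2) →
            ((∑ q ∈ L, (commonNbhdIn (graphOf ω) q.1 q.2 Y).ncard : ℕ) : ℝ) ≤
              72 * L.card * Real.log n) ∧
         (¬ ((L.card : ℝ) ≤ 6 * Real.log n / p n ^ 2) →
            ((∑ q ∈ L, (commonNbhdIn (graphOf ω) q.1 q.2 Y).ncard : ℕ) : ℝ) ≤
              2 * L.card * Y.card * p n ^ 2))})
      atTop (nhds 1) := by
  have hprob : ∀ n, IsProbabilityMeasure (gnp n (p n)) := fun n => by
    haveI := bern_prob (p n) (hp n).1 (hp n).2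
    unfold gnp
    infer_instance
  have hlim : Tendsto (fun n : ℕ => 1 - ENNReal.ofReal (Real.exp (-(1/2 * Real.log n))))
      atTop (nhds 1) := by
    have h1 : Tendsto (fun n : ℕ => Real.exp (-(1/2 * Real.log n))) atTop (nhds 0) := by
      refine Real.tendsto_exp_neg_atTop_nhds_zero.comp ?_
      exact (Real.tendsto_log_atTop.comp tendsto_natCast_atTop_atTop).const_mul_atTop (by norm_num)
    have h2 := ENNReal.tendsto_ofReal h1
    have h3 := ENNReal.Tendsto.sub (tendsto_const_nhds (x := (1 : ENNReal)) (f := (atTop : Filter ℕ)))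
      h2 (Or.inl (by simp))
    simpa using h3
  refine tendsto_of_tendsto_of_tendsto_of_le_of_le' hlim tendsto_const_nhds ?_ ?_
  · filter_upwards [eventually_ge_atTop 1] with n hn
    haveI := hprob n
    have hb := union_bound n hn (p n) (hp n).1 (hp n).2
    refine (tsub_le_tsub_left hb 1).trans ?_
    rw [← prob_compl_eq_one_sub (Set.toFinite _).measurableSet]
    refine measure_mono ?_
    intro ω hω L Y
    simp only [Set.mem_compl_iff, Set.mem_iUnion, not_exists] at hω
    exact not_not.1 (hω L Y)
  · exact Eventually.of_forall fun n => by
      haveI := hprob n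
      exact prob_le_one
end

section
/- Let r ≥ 2 be an integer, let W ⊆ [n] be a fixed set of at most n/(100r)^4 vertices, and let G ~ G(n,p) where p = p(n) ≫ (log n / n)^{1/2}. Then with high probability the following holds: for every r-coloring of the edges of G, every associated majority-color partition W = W_1 ⊎ … ⊎ W_r, and every choice of k_i ≤ 3r − 1 vertex-disjoint cycles C_1^i, …, C_{k_i}^i in each auxiliary graph H_i, the graph G contains k_1 + … + k_r vertex-disjoint monochromatic cycles such that for each i and j there is one of these cycles having color i and containing all vertices of V(C_j^i). -/
open MeasureTheory Filter

def IsMonoCycle {V ι : Type*} (G : SimpleGraph V) (c : Sym2 V → ι) (i : ι) (S : Set V) : Prop :=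
  (∃ v, S = {v}) ∨
  (∃ u v, G.Adj u v ∧ c s(u, v) = i ∧ S = {u, v}) ∨
  (∃ (v : V) (w : G.Walk v v), w.IsCycle ∧ (∀ e ∈ w.edges, c e = i) ∧ S = {x | x ∈ w.support})

def coloredNbhd {n r : ℕ} (G : SimpleGraph (Fin n)) (c : Sym2 (Fin n) → Fin r) (i : Fin r)
    (v : Fin n) (U : Set (Fin n)) : Set (Fin n) :=
  {u | u ∈ U ∧ G.Adj v u ∧ c s(v, u) = i}

def IsMajorityPartition {n r : ℕ} (G : SimpleGraph (Fin n)) (c : Sym2 (Fin n) → Fin r)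
    (W : Finset (Fin n)) (f : Fin n → Fin r) : Prop :=
  ∀ v ∈ W, ∀ j : Fin r,
    (coloredNbhd G c j v ((W : Set (Fin n))ᶜ)).ncard ≤
      (coloredNbhd G c (f v) v ((W : Set (Fin n))ᶜ)).ncard

def auxGraph {n r : ℕ} (G : SimpleGraph (Fin n)) (c : Sym2 (Fin n) → Fin r)
    (W : Finset (Fin n)) (f : Fin n → Fin r) (i : Fin r) (thr : ℝ) : SimpleGraph (Fin n) :=
  SimpleGraph.fromRel (fun v w => v ∈ W ∧ w ∈ W ∧ f v = i ∧ f w = i ∧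
    thr ≤ ((coloredNbhd G c i v ((W : Set (Fin n))ᶜ) ∩
            coloredNbhd G c i w ((W : Set (Fin n))ᶜ)).ncard : ℝ))

lemma fin_succ_val {M : ℕ} (j : Fin (M + 1)) :
    ((j + 1 : Fin (M + 1)) : ℕ) = if (j : ℕ) = M then (0 : ℕ) else (j : ℕ) + 1 := by
  rw [Fin.val_add_one]
  simp only [Fin.ext_iff, Fin.val_last]

lemma exists_fun_of_cycleSet {V : Type*} {H : SimpleGraph V} {S : Set V} (h : IsCycleSet H S) :
    ∃ (m : ℕ) (g : Fin (m + 1) → V), Function.Injective g ∧ Set.range g = S ∧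
      (m ≠ 0 → ∀ j, H.Adj (g j) (g (j + 1))) := by
  rcases h with ⟨v, rfl⟩ | ⟨u, v, huv, rfl⟩ | ⟨v, w, hw, rfl⟩
  · refine ⟨0, fun _ => v, ?_, ?_, ?_⟩
    · intro a b _
      apply Fin.ext
      omega
    · simp
    · simp
  · refine ⟨1, ![u, v], ?_, ?_, ?_⟩
    · intro a b hab
      have := huv.ne
      have := huv.ne'
      fin_cases a <;> fin_cases b <;> simp_all
    · simp [Set.pair_comm]
    · intro _ j
      fin_cases j
      · simpa using huv
      · simpa using huv.symm
  · obtain ⟨L, hL⟩ : ∃ L, w.length = L + 1 :=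
      ⟨w.length - 1, by have := hw.three_le_length; omega⟩
    refine ⟨L, fun j => w.getVert j, ?_, ?_, ?_⟩
    · intro a b hab
      have := hw.getVert_injOn' (show (a : ℕ) ∈ {i | i ≤ w.length - 1} by
        simp only [Set.mem_ofPred_eq]; omega) (show (b : ℕ) ∈ {i | i ≤ w.length - 1} by
        simp only [Set.mem_ofPred_eq]; omega) hab
      exact Fin.ext this
    · ext y
      simp only [Set.mem_range, Set.mem_ofPred_eq, SimpleGraph.Walk.mem_support_iff_exists_getVert]
      constructor
      · rintro ⟨j, rfl⟩
        exact ⟨j, rfl, by omega⟩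
      · rintro ⟨k, rfl, hk⟩
        rcases Nat.lt_or_ge k (L + 1) with h | h
        · exact ⟨⟨k, h⟩, rfl⟩
        · refine ⟨0, ?_⟩
          have : k = w.length := by omega
          subst this
          simp
    · intro _ j
      have hj := w.adj_getVert_succ (i := j) (by omega)
      show H.Adj (w.getVert j) (w.getVert ((j + 1 : Fin (L + 1)) : ℕ))
      rw [fin_succ_val]
      split_ifs with h
      · rw [h, ← hL] at hj
        simp only [SimpleGraph.Walk.getVert_length] at hj
        rw [h]
        simpa using hj
      · exact hj

lemma mono_of_fun {V ι : Type*} {G : SimpleGraph V} {c : Sym2 V → ι} {i : ι} {N : ℕ}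
    (h : Fin (N + 3) → V) (hinj : Function.Injective h)
    (hadj : ∀ j, G.Adj (h j) (h (j + 1)) ∧ c s(h j, h (j + 1)) = i) :
    IsMonoCycle G c i (Set.range h) := by
  have key : ∀ u v, (SimpleGraph.cycleGraph (N + 3)).Adj u v →
      G.Adj (h u) (h v) ∧ c s(h u, h v) = i := by
    intro u v huv
    rw [SimpleGraph.cycleGraph_adj] at huv
    rcases huv with h1 | h1
    · have : u = v + 1 := by rw [← h1]; abel
      subst this
      refine ⟨(hadj v).1.symm, ?_⟩
      rw [Sym2.eq_swap]; exact (hadj v).2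
    · have : v = u + 1 := by rw [← h1]; abel
      subst this
      exact hadj u
  let φ : SimpleGraph.cycleGraph (N + 3) →g G := ⟨h, fun {a b} hab => (key a b hab).1⟩
  refine Or.inr (Or.inr ⟨φ 0, (SimpleGraph.cycleGraph.cycle N).map φ, ?_, ?_, ?_⟩)
  · exact SimpleGraph.Walk.IsCycle.map hinj SimpleGraph.cycleGraph.isCycle_cycle
  · intro e he
    rw [SimpleGraph.Walk.edges_map, List.mem_map] at he
    obtain ⟨e', he', rfl⟩ := he
    have hE := SimpleGraph.Walk.edges_subset_edgeSet _ he'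
    induction e' with
    | _ u v => exact (key u v hE).2
  · ext y
    simp only [Set.mem_range, SimpleGraph.Walk.support_map, List.mem_map, Set.mem_ofPred_eq]
    constructor
    · rintro ⟨j, rfl⟩
      refine ⟨j, ?_, rfl⟩
      rw [SimpleGraph.Walk.mem_support_iff_exists_getVert]
      refine ⟨N + 3 - j, ?_, ?_⟩
      · rw [SimpleGraph.cycleGraph.getVert_cycle (by omega)]
        apply Fin.ext
        have : N + 3 - (N + 3 - (j : ℕ)) = j := by omega
        simp [this]
        omega
      · rw [SimpleGraph.cycleGraph.length_cycle]; omega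
    · rintro ⟨a, _, rfl⟩
      exact ⟨a, rfl⟩

lemma mono_interleave {V ι : Type*} {G : SimpleGraph V} {c : Sym2 V → ι} {i : ι} {m : ℕ}
    (hm : m ≠ 0)
    (g x : Fin (m + 1) → V) (hg : Function.Injective g) (hx : Function.Injective x)
    (hgx : ∀ a b, g a ≠ x b)
    (h1 : ∀ j, G.Adj (g j) (x j) ∧ c s(g j, x j) = i)
    (h2 : ∀ j, G.Adj (g (j + 1)) (x j) ∧ c s(g (j + 1), x j) = i) :
    IsMonoCycle G c i (Set.range g ∪ Set.range x) := by
  obtain ⟨k, rfl⟩ := Nat.exists_eq_succ_of_ne_zero hm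
  simp only [Nat.succ_eq_add_one] at *
  let h : Fin ((2 * k + 1) + 3) → V := fun j =>
    if (j : ℕ) % 2 = 0 then g ⟨(j : ℕ) / 2, by omega⟩ else x ⟨(j : ℕ) / 2, by omega⟩
  have hr : Set.range h = Set.range g ∪ Set.range x := by
    ext y
    simp only [Set.mem_range, Set.mem_union]
    constructor
    · rintro ⟨j, rfl⟩
      by_cases hj : (j : ℕ) % 2 = 0
      · left; exact ⟨_, by simp only [h, if_pos hj]; rfl⟩
      · right; exact ⟨_, by simp only [h, if_neg hj]; rfl⟩
    · rintro (⟨j, rfl⟩ | ⟨j, rfl⟩)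
      · refine ⟨⟨2 * j, by omega⟩, ?_⟩
        simp [h]
      · refine ⟨⟨2 * j + 1, by omega⟩, ?_⟩
        have : ¬ (2 * (j : ℕ) + 1) % 2 = 0 := by omega
        simp only [h, if_neg this]
        congr 1
        apply Fin.ext
        simp only
        omega
  rw [← hr]
  apply mono_of_fun
  · intro a b hab
    simp only [h] at hab
    apply Fin.ext
    split_ifs at hab with ha hb hb
    · have := congrArg Fin.val (hg hab); simp only at this; omega
    · exact absurd hab (hgx _ _)
    · exact absurd hab.symm (hgx _ _)
    · have := congrArg Fin.val (hx hab); simp only at this; omega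
  · intro j
    have hval : ((j + 1 : Fin ((2 * k + 1) + 3)) : ℕ) =
        if (j : ℕ) = 2 * k + 3 then (0 : ℕ) else (j : ℕ) + 1 := fin_succ_val j
    by_cases hj : (j : ℕ) % 2 = 0
    · have e0 : h j = g ⟨(j : ℕ) / 2, by omega⟩ := by simp only [h, if_pos hj]
      have e1 : h (j + 1) = x ⟨(j : ℕ) / 2, by omega⟩ := by
        have hne : ¬ (j : ℕ) = 2 * k + 3 := by omega
        rw [if_neg hne] at hval
        have : ¬ ((j + 1 : Fin ((2 * k + 1) + 3)) : ℕ) % 2 = 0 := by omega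
        simp only [h, if_neg this]
        congr 1
        apply Fin.ext
        simp only
        omega
      rw [e0, e1]
      exact h1 _
    · have e0 : h j = x ⟨(j : ℕ) / 2, by omega⟩ := by simp only [h, if_neg hj]
      have e1 : h (j + 1) = g ((⟨(j : ℕ) / 2, by omega⟩ : Fin (k + 1 + 1)) + 1) := by
        have : ((j + 1 : Fin ((2 * k + 1) + 3)) : ℕ) % 2 = 0 := by
          split_ifs at hval <;> omega
        simp only [h, if_pos this]
        congr 1
        apply Fin.ext
        have hv2 := fin_succ_val (⟨(j : ℕ) / 2, by omega⟩ : Fin (k + 1 + 1))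
        refine Eq.trans ?_ hv2.symm
        simp only
        clear hv2
        split_ifs at hval ⊢ <;> omega
      rw [e0, e1, Sym2.eq_swap]
      exact ⟨(h2 _).1.symm, (h2 _).2⟩

lemma extract {ι V : Type*} [DecidableEq ι] [DecidableEq V] (a b : ι → V)
    (ha : Function.Injective a) (hb : Function.Injective b) (hab : ∀ j, a j ≠ b j)
    (F : Finset ι) : ∃ S ⊆ F, (∀ j ∈ S, ∀ k ∈ S, a j ≠ b k) ∧ F.card ≤ 3 * S.card := by
  have hne : (F.powerset.filter (fun S => ∀ j ∈ S, ∀ k ∈ S, a j ≠ b k)).Nonempty :=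
    ⟨∅, by simp⟩
  obtain ⟨S, hS, hmax⟩ := Finset.exists_max_image _ Finset.card hne
  simp only [Finset.mem_filter, Finset.mem_powerset] at hS hmax
  refine ⟨S, hS.1, hS.2, ?_⟩
  have hsub : F ⊆ S ∪ (F.filter (fun k => b k ∈ S.image a) ∪
      F.filter (fun k => a k ∈ S.image b)) := by
    intro k hk
    by_contra hcon
    simp only [Finset.mem_union, Finset.mem_filter, Finset.mem_image, hk, true_and,
      not_or, not_exists, not_and] at hcon
    obtain ⟨c1, c2, c3⟩ := hcon
    have := hmax (insert k S) ⟨Finset.insert_subset hk hS.1, by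
      intro j hj l hl
      rw [Finset.mem_insert] at hj hl
      rcases hj with rfl | hj <;> rcases hl with rfl | hl
      · exact hab _
      · exact fun e => c3 l hl e.symm
      · exact c2 j hj
      · exact hS.2 j hj l hl⟩
    rw [Finset.card_insert_of_notMem c1] at this
    omega
  have h1 : (F.filter (fun k => b k ∈ S.image a)).card ≤ S.card :=
    (Finset.card_le_card_of_injOn b (fun k hk => (Finset.mem_filter.1 hk).2)
      hb.injOn).trans Finset.card_image_le
  have h2 : (F.filter (fun k => a k ∈ S.image b)).card ≤ S.card :=
    (Finset.card_le_card_of_injOn a (fun k hk => (Finset.mem_filter.1 hk).2)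
      ha.injOn).trans Finset.card_image_le
  have := Finset.card_le_card hsub
  have := Finset.card_union_le S (F.filter (fun k => b k ∈ S.image a) ∪
      F.filter (fun k => a k ∈ S.image b))
  have := Finset.card_union_le (F.filter (fun k => b k ∈ S.image a))
      (F.filter (fun k => a k ∈ S.image b))
  omega

open Classical in
noncomputable def incid {n s : ℕ} (ω : Sym2 (Fin n) → Bool) (a b : Fin s → Fin n)
    (X : Finset (Fin n)) : Finset (Fin s × Fin n) :=
  (Finset.univ ×ˢ X).filter
    (fun q => (graphOf ω).Adj (a q.1) q.2 ∧ (graphOf ω).Adj (b q.1) q.2)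

def Conds {n s : ℕ} (W : Finset (Fin n)) (a b : Fin s → Fin n) (X : Finset (Fin n)) : Prop :=
  Function.Injective a ∧ Function.Injective b ∧ (∀ j k, a j ≠ b k) ∧ (∀ j, a j ∈ W) ∧
    (∀ j, b j ∈ W) ∧ (∀ y ∈ X, y ∉ W) ∧ X.card ≤ W.card

open Classical in
lemma hall_step {n : ℕ} {ι : Type*} [Fintype ι] (W : Finset (Fin n)) (thr : ℝ) (hthr : 0 < thr)
    (ω : Sym2 (Fin n) → Bool)
    (hgood : ∀ s : ℕ, 1 ≤ s → s ≤ n → ∀ (a b : Fin s → Fin n) (x : Fin (3 * s) → Fin n),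
      Conds W a b (Finset.univ.image x) →
      ((incid ω a b (Finset.univ.image x)).card : ℝ) < s * thr)
    (av bv : ι → Fin n) (ha : Function.Injective av) (hb : Function.Injective bv)
    (hab : ∀ q, av q ≠ bv q) (haW : ∀ q, av q ∈ W) (hbW : ∀ q, bv q ∈ W)
    (A : ι → Finset (Fin n)) (hA : ∀ q, ∀ y ∈ A q, y ∉ W ∧ (graphOf ω).Adj (av q) y ∧
      (graphOf ω).Adj (bv q) y) (hAc : ∀ q, thr ≤ (A q).card) :
    ∃ x : ι → Fin n, Function.Injective x ∧ ∀ q, x q ∈ A q := by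
  rw [← Finset.all_card_le_biUnion_card_iff_exists_injective]
  intro F
  by_contra hlt
  push Not at hlt
  obtain ⟨S, hSF, hS, hcard⟩ := extract av bv ha hb hab F
  set X := F.biUnion A with hX
  have hFpos : 0 < F.card := by omega
  have hspos : 0 < S.card := by omega
  have hFW : F.card ≤ W.card :=
    Finset.card_le_card_of_injOn av (fun q _ => haW q) ha.injOn
  let s := S.card
  let e : Fin s ≃ S := S.equivFin.symm
  have hsn : s ≤ n := by
    have h1 := Finset.card_le_card hSF
    have h2 : W.card ≤ n := by simpa using Finset.card_le_univ W
    show S.card ≤ n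
    omega
  have hXne : X.Nonempty := by
    obtain ⟨q, hq⟩ := Finset.card_pos.1 hFpos
    have h1 : (0 : ℝ) < (A q).card := hthr.trans_le (hAc q)
    have h2 : 0 < (A q).card := by exact_mod_cast h1
    obtain ⟨y, hy⟩ := Finset.card_pos.1 h2
    exact ⟨y, Finset.mem_biUnion.2 ⟨q, hq, hy⟩⟩
  obtain ⟨x, hx⟩ : ∃ x : Fin (3 * s) → Fin n, Finset.univ.image x = X := by
    obtain ⟨y0, hy0⟩ := hXne
    have hc : X.card ≤ 3 * s := by show _ ≤ 3 * S.card; omega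
    refine ⟨fun j => if h : (j : ℕ) < X.card then (X.equivFin.symm ⟨j, h⟩ : Fin n) else y0, ?_⟩
    ext y
    simp only [Finset.mem_image, Finset.mem_univ, true_and]
    constructor
    · rintro ⟨j, rfl⟩
      split_ifs
      · exact Subtype.coe_prop _
      · exact hy0
    · intro hy
      refine ⟨⟨X.equivFin ⟨y, hy⟩, by omega⟩, ?_⟩
      simp
  have := hgood s hspos hsn (fun j => av (e j)) (fun j => bv (e j)) x (by
    rw [hx]
    refine ⟨fun i j h => e.injective (Subtype.ext (ha h)),
      fun i j h => e.injective (Subtype.ext (hb h)),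
      fun j k => hS _ (e j).2 _ (e k).2, fun j => haW _, fun j => hbW _, ?_, by omega⟩
    intro y hy
    obtain ⟨q, hq, hy⟩ := Finset.mem_biUnion.1 hy
    exact (hA q y hy).1)
  rw [hx] at this
  have h2 : (Finset.univ.sigma (fun j : Fin s => A (e j))).card ≤
      (incid ω (fun j => av (e j)) (fun j => bv (e j)) X).card := by
    apply Finset.card_le_card_of_injOn (fun q => (q.1, q.2))
    · rintro ⟨j, y⟩ hq
      simp only [Finset.coe_sigma, Set.mem_sigma_iff, Finset.mem_coe, Finset.mem_univ,
        true_and] at hq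
      simp only [incid, Finset.coe_filter, Finset.mem_product, Finset.mem_univ, true_and]
      have := hA _ _ hq
      exact ⟨Finset.mem_biUnion.2 ⟨_, hSF (e j).2, hq⟩, this.2⟩
    · rintro ⟨j, y⟩ _ ⟨j', y'⟩ _ h
      simp only [Prod.mk.injEq] at h
      obtain ⟨rfl, rfl⟩ := h
      rfl
  rw [Finset.card_sigma] at h2
  have h3 : (s : ℝ) * thr ≤ ((∑ j : Fin s, (A (e j)).card : ℕ) : ℝ) := by
    push_cast
    calc (s : ℝ) * thr = ∑ j : Fin s, thr := by simp
      _ ≤ _ := Finset.sum_le_sum (fun j _ => hAc _)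
  have h4 : ((∑ j : Fin s, (A (e j)).card : ℕ) : ℝ) ≤ _ := Nat.cast_le.2 h2
  linarith

open Classical in
lemma det_step {n r : ℕ} (W : Finset (Fin n)) (thr : ℝ) (hthr : 0 < thr)
    (ω : Sym2 (Fin n) → Bool)
    (hgood : ∀ s : ℕ, 1 ≤ s → s ≤ n → ∀ (a b : Fin s → Fin n) (x : Fin (3 * s) → Fin n),
      Conds W a b (Finset.univ.image x) →
      ((incid ω a b (Finset.univ.image x)).card : ℝ) < s * thr)
    (col : Sym2 (Fin n) → Fin r) (f : Fin n → Fin r) (k : Fin r → ℕ)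
    (Cyc : (i : Fin r) → Fin (k i) → Set (Fin n))
    (hC : ∀ i j, IsCycleSet (auxGraph (graphOf ω) col W f i thr) (Cyc i j) ∧
            Cyc i j ⊆ {v | v ∈ W ∧ f v = i})
    (hD : ∀ a b : Σ i : Fin r, Fin (k i), a ≠ b → Disjoint (Cyc a.1 a.2) (Cyc b.1 b.2)) :
    ∃ D : (i : Fin r) → Fin (k i) → Set (Fin n),
            (∀ i j, IsMonoCycle (graphOf ω) col i (D i j) ∧ Cyc i j ⊆ D i j) ∧
            (∀ a b : Σ i : Fin r, Fin (k i), a ≠ b → Disjoint (D a.1 a.2) (D b.1 b.2)) := by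
  choose m g hg hgr hga using
    fun a : (Σ i : Fin r, Fin (k i)) => exists_fun_of_cycleSet (hC a.1 a.2).1
  have hgW : ∀ a j, g a j ∈ W := by
    intro a j
    have : g a j ∈ Cyc a.1 a.2 := by rw [← hgr a]; exact ⟨j, rfl⟩
    exact ((hC a.1 a.2).2 this).1
  let ι := {q : Σ a : (Σ i : Fin r, Fin (k i)), Fin (m a + 1) // m q.1 ≠ 0}
  let av : ι → Fin n := fun q => g q.1.1 q.1.2
  let bv : ι → Fin n := fun q => g q.1.1 (q.1.2 + 1)
  let N : ι → Fin n → Set (Fin n) := fun q v =>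
    coloredNbhd (graphOf ω) col q.1.1.1 v ((W : Set (Fin n))ᶜ)
  let A : ι → Finset (Fin n) := fun q => (Set.toFinite (N q (av q) ∩ N q (bv q))).toFinset
  have hg2 : ∀ a b j l, g a j = g b l → a = b := by
    intro a b j l h
    by_contra hne
    have h1 : g a j ∈ Cyc a.1 a.2 := by rw [← hgr a]; exact ⟨j, rfl⟩
    have h2 : g b l ∈ Cyc b.1 b.2 := by rw [← hgr b]; exact ⟨l, rfl⟩
    exact Set.disjoint_left.1 (hD a b hne) h1 (h ▸ h2)
  have hai : Function.Injective av := by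
    rintro ⟨⟨a, j⟩, h1⟩ ⟨⟨b, l⟩, h2⟩ h
    have := hg2 _ _ _ _ h
    simp only at this
    subst this
    have := hg _ h
    simp only at this
    subst this
    rfl
  have hbi : Function.Injective bv := by
    rintro ⟨⟨a, j⟩, h1⟩ ⟨⟨b, l⟩, h2⟩ h
    have := hg2 _ _ _ _ h
    simp only at this
    subst this
    have := hg _ h
    simp only [add_left_inj] at this
    subst this
    rfl
  have hadj : ∀ q : ι, (auxGraph (graphOf ω) col W f q.1.1.1 thr).Adj (av q) (bv q) :=
    fun q => hga q.1.1 q.2 q.1.2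
  obtain ⟨x, hxi, hxA⟩ := hall_step W thr hthr ω hgood av bv hai hbi (fun q => (hadj q).ne)
    (fun q => hgW _ _) (fun q => hgW _ _) A (by
      intro q y hy
      simp only [A, Set.Finite.mem_toFinset] at hy
      exact ⟨hy.1.1, hy.1.2.1, hy.2.2.1⟩) (by
      intro q
      have h := hadj q
      simp only [A]
      rw [← Set.ncard_eq_toFinset_card]
      simp only [auxGraph, SimpleGraph.fromRel_adj] at h
      rcases h.2 with h | h
      · exact h.2.2.2.2
      · rw [Set.inter_comm]; exact h.2.2.2.2)
  have hxA' : ∀ q, x q ∈ N q (av q) ∩ N q (bv q) := by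
    intro q
    simpa [A] using hxA q
  refine ⟨fun i j => Cyc i j ∪ {y | ∃ q : ι, q.1.1 = ⟨i, j⟩ ∧ y = x q}, ?_, ?_⟩
  · intro i j
    refine ⟨?_, Set.subset_union_left⟩
    beta_reduce
    by_cases hm : m ⟨i, j⟩ = 0
    · have : {y | ∃ q : ι, q.1.1 = ⟨i, j⟩ ∧ y = x q} = ∅ := by
        ext y
        constructor
        · rintro ⟨q, hq, _⟩
          exact absurd (hq ▸ hm) q.2
        · exact fun h => h.elim
      rw [this, Set.union_empty]
      left
      refine ⟨g ⟨i, j⟩ 0, ?_⟩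
      have h1 := hgr ⟨i, j⟩
      simp only at h1
      rw [← h1]
      ext y
      simp only [Set.mem_range, Set.mem_singleton_iff]
      constructor
      · rintro ⟨l, rfl⟩
        congr 1
        apply Fin.ext
        simp only [Fin.val_zero]
        omega
      · rintro rfl
        exact ⟨0, rfl⟩
    · have h1 := hgr ⟨i, j⟩
      simp only at h1
      have h2 : {y | ∃ q : ι, q.1.1 = ⟨i, j⟩ ∧ y = x q} =
          Set.range (fun l : Fin (m ⟨i, j⟩ + 1) => x ⟨⟨⟨i, j⟩, l⟩, hm⟩) := by
        ext y
        constructor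
        · rintro ⟨⟨⟨a, l⟩, hq⟩, h, rfl⟩
          simp only at h
          subst h
          exact ⟨l, rfl⟩
        · rintro ⟨l, rfl⟩
          exact ⟨_, rfl, rfl⟩
      rw [← h1, h2]
      apply mono_interleave hm
      · exact hg _
      · intro l l' h
        have := hxi h
        simpa [ι] using this
      · intro l l' h
        exact (hxA' ⟨⟨⟨i, j⟩, l'⟩, hm⟩).1.1 (h ▸ hgW ⟨i, j⟩ l)
      · intro l
        exact (hxA' ⟨⟨⟨i, j⟩, l⟩, hm⟩).1.2
      · intro l
        exact (hxA' ⟨⟨⟨i, j⟩, l⟩, hm⟩).2.2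
  · intro a b hne
    have hCW : ∀ (a : Σ i : Fin r, Fin (k i)) y, y ∈ Cyc a.1 a.2 → y ∈ W :=
      fun a y hy => ((hC a.1 a.2).2 hy).1
    have hxW : ∀ q, x q ∉ W := fun q => (hxA' q).1.1
    rw [Set.disjoint_left]
    rintro y (hy | ⟨q, hq, rfl⟩) (hy' | ⟨q', hq', h⟩)
    · exact Set.disjoint_left.1 (hD a b hne) hy hy'
    · exact hxW q' (h ▸ hCW a y hy)
    · exact hxW q (hCW b _ hy')
    · have := hxi h
      subst this
      exact hne (hq.symm.trans hq')

lemma bernoulliM_prob {q : ℝ} (h0 : 0 ≤ q) (h1 : q ≤ 1) : IsProbabilityMeasure (bernoulliM q) := by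
  constructor
  simp only [bernoulliM, Measure.coe_add, Measure.coe_smul, Pi.add_apply, Pi.smul_apply,
    measure_univ, smul_eq_mul, mul_one]
  rw [← ENNReal.ofReal_add h0 (by linarith)]
  simp

lemma gnp_prob (n : ℕ) {q : ℝ} (h0 : 0 ≤ q) (h1 : q ≤ 1) : IsProbabilityMeasure (gnp n q) := by
  have := bernoulliM_prob h0 h1
  unfold gnp
  infer_instance

open Classical in
lemma gnp_cyl (n : ℕ) {q : ℝ} (h0 : 0 ≤ q) (h1 : q ≤ 1) (E : Finset (Sym2 (Fin n))) :
    gnp n q {ω | ∀ e ∈ E, ω e = true} = ENNReal.ofReal q ^ E.card := by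
  have := bernoulliM_prob h0 h1
  have : {ω : Sym2 (Fin n) → Bool | ∀ e ∈ E, ω e = true} =
      Set.pi Set.univ (fun e => if e ∈ E then {true} else Set.univ) := by
    ext ω
    simp only [Set.mem_pi, Set.mem_univ, true_imp_iff]
    constructor
    · intro h e
      by_cases he : e ∈ E
      · simpa [he] using h e he
      · simp [he]
    · intro h e he
      simpa [he] using h e
  rw [this, gnp, Measure.pi_pi]
  have h2 : ∀ e, bernoulliM q (if e ∈ E then {true} else Set.univ) =
      if e ∈ E then ENNReal.ofReal q else 1 := by
    intro e
    split_ifs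
    · simp [bernoulliM]
    · exact measure_univ
  simp only [h2]
  rw [Finset.prod_ite_mem]
  simp

lemma graphOf_adj {n : ℕ} {ω : Sym2 (Fin n) → Bool} {u v : Fin n} (h : (graphOf ω).Adj u v) :
    ω s(u, v) = true := by
  simp only [graphOf, SimpleGraph.fromRel_adj] at h
  rcases h.2 with h | h
  · exact h
  · rw [Sym2.eq_swap]; exact h

open Classical in
lemma gnp_incid {n s : ℕ} {q : ℝ} (h0 : 0 ≤ q) (h1 : q ≤ 1) (W : Finset (Fin n))
    (a b : Fin s → Fin n) (X : Finset (Fin n)) (hc : Conds W a b X) (t : ℕ) :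
    gnp n q {ω | t ≤ (incid ω a b X).card} ≤
      ((s * X.card).choose t : ENNReal) * ENNReal.ofReal q ^ (2 * t) := by
  obtain ⟨ha, hb, hab, haW, hbW, hX, -⟩ := hc
  let P : Finset (Finset (Fin s × Fin n)) := (Finset.univ ×ˢ X).powersetCard t
  let Ed : Finset (Fin s × Fin n) → Finset (Sym2 (Fin n)) := fun T =>
    T.image (fun q => s(a q.1, q.2)) ∪ T.image (fun q => s(b q.1, q.2))
  have hsub : {ω : Sym2 (Fin n) → Bool | t ≤ (incid ω a b X).card} ⊆
      ⋃ T ∈ P, {ω | ∀ e ∈ Ed T, ω e = true} := by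
    intro ω hω
    obtain ⟨T, hT, hTc⟩ := Finset.exists_subset_card_eq (show t ≤ (incid ω a b X).card from hω)
    refine Set.mem_biUnion (x := T) ?_ ?_
    · exact Finset.mem_powersetCard.2 ⟨hT.trans (Finset.filter_subset _ _), hTc⟩
    · intro e he
      rcases Finset.mem_union.1 he with he | he
      · obtain ⟨z, hz, rfl⟩ := Finset.mem_image.1 he
        exact graphOf_adj (Finset.mem_filter.1 (hT hz)).2.1
      · obtain ⟨z, hz, rfl⟩ := Finset.mem_image.1 he
        exact graphOf_adj (Finset.mem_filter.1 (hT hz)).2.2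
  have hcard : ∀ T ∈ P, (Ed T).card = 2 * t := by
    intro T hT
    obtain ⟨hTs, hTc⟩ := Finset.mem_powersetCard.1 hT
    have hTX : ∀ z ∈ T, z.2 ∉ W := fun z hz => hX _ (Finset.mem_product.1 (hTs hz)).2
    simp only [Ed]
    rw [Finset.card_union_of_disjoint, Finset.card_image_of_injOn, Finset.card_image_of_injOn, hTc]
    · omega
    · rintro z hz w hw h
      simp only [Sym2.eq_iff] at h
      rcases h with ⟨h, h'⟩ | ⟨h, h'⟩
      · exact Prod.ext (hb h) h'
      · exact absurd (h ▸ hbW z.1) (hTX w hw)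
    · rintro z hz w hw h
      simp only [Sym2.eq_iff] at h
      rcases h with ⟨h, h'⟩ | ⟨h, h'⟩
      · exact Prod.ext (ha h) h'
      · exact absurd (h ▸ haW z.1) (hTX w hw)
    · rw [Finset.disjoint_left]
      intro e he he'
      obtain ⟨z, hz, rfl⟩ := Finset.mem_image.1 he
      obtain ⟨w, hw, h⟩ := Finset.mem_image.1 he'
      simp only [Sym2.eq_iff] at h
      rcases h with ⟨h, h'⟩ | ⟨h, h'⟩
      · exact hab _ _ h.symm
      · exact absurd (h ▸ hbW w.1) (hTX z hz)
  calc gnp n q {ω | t ≤ (incid ω a b X).card}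
      ≤ gnp n q (⋃ T ∈ P, {ω | ∀ e ∈ Ed T, ω e = true}) := measure_mono hsub
    _ ≤ ∑ T ∈ P, gnp n q {ω | ∀ e ∈ Ed T, ω e = true} := measure_biUnion_finset_le _ _
    _ = ∑ T ∈ P, ENNReal.ofReal q ^ (2 * t) :=
        Finset.sum_congr rfl (fun T hT => by rw [gnp_cyl n h0 h1, hcard T hT])
    _ = _ := by
        rw [Finset.sum_const, nsmul_eq_mul]
        simp [P, Finset.card_powersetCard]

lemma num_bound (N t : ℕ) (q : ℝ) (h0 : 0 ≤ q) (ht : 0 < t)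
    (h : 16 * ((N : ℝ) * q ^ 2) ≤ t) :
    ((N.choose t : ℕ) : ℝ) * q ^ (2 * t) ≤ Real.exp (-(t : ℝ)) := by
  have htp : (0 : ℝ) < t := by exact_mod_cast ht
  have h1 := Nat.choose_le_pow_div (α := ℝ) t N
  have h2 := Real.pow_div_factorial_le_exp (x := (t : ℝ)) htp.le t
  have hf : (0 : ℝ) < (t.factorial : ℝ) := by exact_mod_cast t.factorial_pos
  have htt : (0 : ℝ) < (t : ℝ) ^ t := by positivity
  have he : Real.exp 2 ≤ 16 := by
    have := Real.exp_one_lt_d9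
    have h3 : Real.exp 2 = Real.exp 1 * Real.exp 1 := by rw [← Real.exp_add]; norm_num
    rw [h3]
    nlinarith [Real.exp_pos 1]
  have hq : (N : ℝ) * q ^ 2 ≤ t * Real.exp (-2) := by
    have h4 : Real.exp 2 * Real.exp (-2) = 1 := by rw [← Real.exp_add]; simp
    have h5 : (N : ℝ) * q ^ 2 * Real.exp 2 ≤ t := by
      have : 0 ≤ (N : ℝ) * q ^ 2 := by positivity
      nlinarith
    calc (N : ℝ) * q ^ 2 = (N : ℝ) * q ^ 2 * Real.exp 2 * Real.exp (-2) := by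
          rw [mul_assoc _ (Real.exp 2), h4, mul_one]
      _ ≤ _ := mul_le_mul_of_nonneg_right h5 (Real.exp_pos _).le
  calc ((N.choose t : ℕ) : ℝ) * q ^ (2 * t) ≤ (N : ℝ) ^ t / t.factorial * q ^ (2 * t) := by gcongr
    _ = ((N : ℝ) * q ^ 2) ^ t / t.factorial := by rw [mul_pow, ← pow_mul]; ring
    _ ≤ (t * Real.exp (-2)) ^ t / t.factorial := by gcongr
    _ = ((t : ℝ) ^ t / t.factorial) * Real.exp (-2) ^ t := by rw [mul_pow]; ring
    _ ≤ Real.exp t * Real.exp (-2) ^ t := by gcongr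
    _ = Real.exp (-(t : ℝ)) := by
        rw [← Real.exp_nat_mul, ← Real.exp_add]; congr 1; ring

/-- measure of one bad event -/
lemma bad_one {n s r : ℕ} {q : ℝ} (hr : 2 ≤ r) (hs : 1 ≤ s) (h0 : 0 ≤ q) (h1 : q ≤ 1)
    (W : Finset (Fin n)) (hW : (W.card : ℝ) ≤ (n : ℝ) / (100 * r : ℝ) ^ 4)
    (thr : ℝ) (hthr : thr = (n : ℝ) * q ^ 2 / (50 * r : ℝ) ^ 4) (hpos : 0 < thr)
    (a b : Fin s → Fin n) (X : Finset (Fin n)) (hc : Conds W a b X) :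
    gnp n q {ω | (s : ℝ) * thr ≤ ((incid ω a b X).card : ℝ)} ≤
      ENNReal.ofReal (Real.exp (-(s * thr))) := by
  have hs' : (1 : ℝ) ≤ s := by exact_mod_cast hs
  have hr' : (0 : ℝ) < r := by exact_mod_cast (by omega : 0 < r)
  have hst : 0 < (s : ℝ) * thr := by positivity
  set t := ⌈(s : ℝ) * thr⌉₊ with ht
  have htp : 0 < t := Nat.ceil_pos.2 hst
  have hle : (s : ℝ) * thr ≤ t := Nat.le_ceil _
  have hset : {ω : Sym2 (Fin n) → Bool | (s : ℝ) * thr ≤ ((incid ω a b X).card : ℝ)} ⊆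
      {ω | t ≤ (incid ω a b X).card} := fun ω hω => Nat.ceil_le.2 hω
  have hXW : (X.card : ℝ) ≤ W.card := by exact_mod_cast hc.2.2.2.2.2.2
  have hkey : 16 * (((s * X.card : ℕ) : ℝ) * q ^ 2) ≤ t := by
    refine le_trans ?_ hle
    push_cast
    have h2 : 16 * ((X.card : ℝ) * q ^ 2) ≤ thr := by
      calc 16 * ((X.card : ℝ) * q ^ 2) ≤ 16 * (((n : ℝ) / (100 * r : ℝ) ^ 4) * q ^ 2) := by
            gcongr
            exact hXW.trans hW
        _ = thr := by
            rw [hthr]; field_simp; ring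
    nlinarith
  calc gnp n q {ω | (s : ℝ) * thr ≤ ((incid ω a b X).card : ℝ)}
      ≤ gnp n q {ω | t ≤ (incid ω a b X).card} := measure_mono hset
    _ ≤ ((s * X.card).choose t : ENNReal) * ENNReal.ofReal q ^ (2 * t) :=
        gnp_incid h0 h1 W a b X hc t
    _ = ENNReal.ofReal ((((s * X.card).choose t : ℕ) : ℝ) * q ^ (2 * t)) := by
        rw [ENNReal.ofReal_mul (by positivity), ENNReal.ofReal_natCast, ENNReal.ofReal_pow h0]
    _ ≤ _ := by
        apply ENNReal.ofReal_le_ofReal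
        refine (num_bound _ t q h0 htp hkey).trans ?_
        exact Real.exp_le_exp.2 (by linarith)

/-- the full bad event -/
def BadSet (n : ℕ) (W : Finset (Fin n)) (thr : ℝ) : Set (Sym2 (Fin n) → Bool) :=
  ⋃ s ∈ Finset.Icc 1 n, ⋃ z ∈ (Finset.univ :
    Finset ((Fin s → Fin n) × (Fin s → Fin n) × (Fin (3 * s) → Fin n))),
    {ω | Conds W z.1 z.2.1 (Finset.univ.image z.2.2) ∧
      (s : ℝ) * thr ≤ ((incid ω z.1 z.2.1 (Finset.univ.image z.2.2)).card : ℝ)}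

lemma bad_bound_s12 {n r : ℕ} {q : ℝ} (hn : 1 ≤ n) (hr : 2 ≤ r) (h0 : 0 ≤ q) (h1 : q ≤ 1)
    (W : Finset (Fin n)) (hW : (W.card : ℝ) ≤ (n : ℝ) / (100 * r : ℝ) ^ 4)
    (thr : ℝ) (hthr : thr = (n : ℝ) * q ^ 2 / (50 * r : ℝ) ^ 4) (hpos : 0 < thr)
    (hlog : 7 * Real.log n ≤ thr) :
    gnp n q (BadSet n W thr) ≤ ENNReal.ofReal (1 / n) := by
  have hn' : (1 : ℝ) ≤ n := by exact_mod_cast hn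
  have hnp : (0 : ℝ) < n := by linarith
  have hinner : ∀ s ∈ Finset.Icc 1 n, gnp n q (⋃ z ∈ (Finset.univ :
    Finset ((Fin s → Fin n) × (Fin s → Fin n) × (Fin (3 * s) → Fin n))),
    {ω | Conds W z.1 z.2.1 (Finset.univ.image z.2.2) ∧
      (s : ℝ) * thr ≤ ((incid ω z.1 z.2.1 (Finset.univ.image z.2.2)).card : ℝ)}) ≤
      ENNReal.ofReal (1 / (n : ℝ) ^ 2) := by
    intro s hs
    have hs1 := (Finset.mem_Icc.1 hs).1
    have hs' : (1 : ℝ) ≤ s := by exact_mod_cast hs1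
    refine (measure_biUnion_finset_le _ _).trans ?_
    refine (Finset.sum_le_card_nsmul _ _ (ENNReal.ofReal (Real.exp (-(s * thr)))) ?_).trans ?_
    · intro z _
      by_cases hc : Conds W z.1 z.2.1 (Finset.univ.image z.2.2)
      · refine le_trans (measure_mono ?_)
          (bad_one hr hs1 h0 h1 W hW thr hthr hpos z.1 z.2.1 (Finset.univ.image z.2.2) hc)
        exact fun ω hω => hω.2
      · have : {ω : Sym2 (Fin n) → Bool | Conds W z.1 z.2.1 (Finset.univ.image z.2.2) ∧
          (s : ℝ) * thr ≤ ((incid ω z.1 z.2.1 (Finset.univ.image z.2.2)).card : ℝ)} = ∅ := by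
          ext ω
          exact ⟨fun h => hc h.1, fun h => h.elim⟩
        rw [this]
        simp
    · have hcard : (Finset.univ : Finset ((Fin s → Fin n) × (Fin s → Fin n) ×
          (Fin (3 * s) → Fin n))).card = n ^ (5 * s) := by
        simp only [Finset.card_univ, Fintype.card_prod, Fintype.card_fun, Fintype.card_fin]
        ring
      rw [hcard, nsmul_eq_mul, ← ENNReal.ofReal_natCast, ← ENNReal.ofReal_mul (by positivity)]
      apply ENNReal.ofReal_le_ofReal
      have hl := Real.log_nonneg hn'
      have e1 : ((n ^ (5 * s) : ℕ) : ℝ) = Real.exp (5 * s * Real.log n) := by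
        push_cast
        rw [← Real.rpow_natCast, Real.rpow_def_of_pos hnp]
        push_cast
        congr 1; ring
      have e2 : 1 / (n : ℝ) ^ 2 = Real.exp (-(2 * Real.log n)) := by
        rw [Real.exp_neg, one_div, mul_comm, Real.exp_mul, Real.exp_log hnp]
        norm_cast
      rw [e1, e2, ← Real.exp_add]
      apply Real.exp_le_exp.2
      nlinarith [mul_le_mul_of_nonneg_left hlog (by linarith : (0 : ℝ) ≤ s),
        mul_nonneg (sub_nonneg.2 hs') hl]
  refine (measure_biUnion_finset_le _ _).trans ?_
  refine (Finset.sum_le_card_nsmul _ _ _ hinner).trans ?_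
  rw [Nat.card_Icc, Nat.add_sub_cancel, nsmul_eq_mul, ← ENNReal.ofReal_natCast,
    ← ENNReal.ofReal_mul (by positivity)]
  apply ENNReal.ofReal_le_ofReal
  apply le_of_eq
  field_simp

/-- Let `r ≥ 2`, `W = W(n) ⊆ [n]` fixed sets of at most `n/(100r)^4`
vertices, and `p = p(n) ≫ (log n/n)^{1/2}`. Then w.h.p.: for every `r`-coloring of the edges of
`G ~ G(n,p)`, every associated majority-color partition of `W`, and every choice of `kᵢ ≤ 3r-1`
vertex-disjoint cycles `C₁ⁱ, …` in each auxiliary graph `Hᵢ`, the graph `G` contains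
`k₁ + ⋯ + k_r` vertex-disjoint monochromatic cycles such that for each `i`, `j`, one of these
cycles has color `i` and contains all vertices of `V(Cⱼⁱ)`. -/
theorem stmt12 (r : ℕ) (hr : 2 ≤ r)
    (W : (n : ℕ) → Finset (Fin n))
    (hW : ∀ n : ℕ, ((W n).card : ℝ) ≤ (n : ℝ) / (100 * r : ℝ) ^ 4)
    (p : ℕ → ℝ) (hp0 : ∀ n, 0 ≤ p n) (hp1 : ∀ n, p n ≤ 1)
    (hpgg : Tendsto (fun n : ℕ => p n / Real.sqrt (Real.log n / n)) atTop atTop) :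
    Tendsto (fun n => gnp n (p n)
      {ω | ∀ (col : Sym2 (Fin n) → Fin r) (f : Fin n → Fin r),
        IsMajorityPartition (graphOf ω) col (W n) f →
        ∀ (k : Fin r → ℕ), (∀ i, k i ≤ 3 * r - 1) →
        ∀ Cyc : (i : Fin r) → Fin (k i) → Set (Fin n),
          (∀ i j,
            IsCycleSet (auxGraph (graphOf ω) col (W n) f i
              ((n : ℝ) * p n ^ 2 / (50 * r : ℝ) ^ 4)) (Cyc i j) ∧
            Cyc i j ⊆ {v | v ∈ W n ∧ f v = i}) →
          (∀ a b : Σ i : Fin r, Fin (k i), a ≠ b → Disjoint (Cyc a.1 a.2) (Cyc b.1 b.2)) →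
          ∃ D : (i : Fin r) → Fin (k i) → Set (Fin n),
            (∀ i j, IsMonoCycle (graphOf ω) col i (D i j) ∧ Cyc i j ⊆ D i j) ∧
            (∀ a b : Σ i : Fin r, Fin (k i), a ≠ b → Disjoint (D a.1 a.2) (D b.1 b.2))})
      atTop (nhds 1) := by
  have hr' : (0 : ℝ) < r := by exact_mod_cast (by omega : 0 < r)
  have hev : ∀ᶠ n : ℕ in atTop, 7 * Real.log n ≤ (n : ℝ) * p n ^ 2 / (50 * r : ℝ) ^ 4 := by
    set K : ℝ := 3 * (50 * r : ℝ) ^ 2 with hK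
    filter_upwards [hpgg.eventually_ge_atTop K, eventually_ge_atTop 2] with n hn hn2
    have hn2' : (2 : ℝ) ≤ n := by exact_mod_cast hn2
    have hl : 0 < Real.log n := Real.log_pos (by linarith)
    have hq : 0 < Real.log n / n := by positivity
    have hsq := Real.sqrt_pos.2 hq
    rw [le_div_iff₀ hsq] at hn
    have hKp : 0 < K := by positivity
    have h2 : (K * Real.sqrt (Real.log n / n)) ^ 2 ≤ p n ^ 2 := by gcongr
    rw [mul_pow, Real.sq_sqrt hq.le] at h2
    have h3 : K ^ 2 * Real.log n ≤ n * p n ^ 2 := by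
      calc K ^ 2 * Real.log n = n * (K ^ 2 * (Real.log n / n)) := by field_simp
        _ ≤ _ := by gcongr
    rw [le_div_iff₀ (by positivity)]
    refine le_trans ?_ h3
    rw [hK]
    have : 0 ≤ Real.log n * (50 * r : ℝ) ^ 4 := by positivity
    nlinarith
  have hbad : Tendsto (fun n : ℕ => (1 : ENNReal) - ENNReal.ofReal (1 / (n : ℝ))) atTop (nhds 1) := by
    have h1 : Tendsto (fun n : ℕ => ENNReal.ofReal (1 / (n : ℝ))) atTop (nhds 0) := by
      have := ENNReal.tendsto_ofReal (tendsto_one_div_atTop_nhds_zero_nat (𝕜 := ℝ))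
      simpa using this
    have := ENNReal.Tendsto.sub (tendsto_const_nhds (x := (1 : ENNReal)) (f := atTop)) h1
      (Or.inl ENNReal.one_ne_top)
    simpa using this
  refine tendsto_of_tendsto_of_tendsto_of_le_of_le' hbad tendsto_const_nhds ?_ ?_
  · filter_upwards [hev, eventually_ge_atTop 2] with n hn hn2
    have := gnp_prob n (hp0 n) (hp1 n)
    have hn2' : (2 : ℝ) ≤ n := by exact_mod_cast hn2
    have hl : 0 < Real.log n := Real.log_pos (by linarith)
    have hpos : 0 < (n : ℝ) * p n ^ 2 / (50 * r : ℝ) ^ 4 := by linarith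
    have hb := bad_bound_s12 (by omega) hr (hp0 n) (hp1 n) (W n) (hW n) _ rfl hpos hn
    rw [tsub_le_iff_right]
    refine le_trans ?_ (add_le_add_right hb _)
    rw [← measure_univ (μ := gnp n (p n))]
    refine le_trans (measure_mono ?_) (measure_union_le _ _)
    intro ω _
    by_cases hω : ω ∈ BadSet n (W n) ((n : ℝ) * p n ^ 2 / (50 * r : ℝ) ^ 4)
    · exact Or.inr hω
    · left
      intro col f _ k _ Cyc hC hD
      refine det_step (W n) _ hpos ω ?_ col f k Cyc hC hD
      intro s hs1 hsn a b x hc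
      by_contra hcon
      apply hω
      exact Set.mem_biUnion (Finset.mem_coe.2 (Finset.mem_Icc.2 ⟨hs1, hsn⟩))
        (Set.mem_biUnion (x := (a, b, x)) (Finset.mem_coe.2 (Finset.mem_univ _))
          ⟨hc, not_lt.1 hcon⟩)
  · filter_upwards with n
    have := gnp_prob n (hp0 n) (hp1 n)
    exact prob_le_one
end
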